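/- arXiv:1202.4803 — 4 statements merged into one kernel-verified Lean document; each statement's English description precedes it below -/
import Mathlib

section
/- Let 𝒜 be an abelian category and 𝒞 a full subcategory of 𝒜 which is closed under extensions and cokernels. Then an object I ∈ 𝒞 is 𝒞-split injective if and only if it is 𝒞-Ext injective. -/
/-!
STATEMENT 1: Let 𝒜 be an abelian category and 𝒞 a full subcategory of 𝒜 closed under
extensions and cokernels.  Then an object `I ∈ 𝒞` is 𝒞-split injective (every monomorphism
`I → M` in 𝒜 with `M ∈ 𝒞` splits) if and only if it is 𝒞-Ext injective
(`Ext¹_𝒜(X, I) = 0` for all `X ∈ 𝒞`).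
-/

open CategoryTheory CategoryTheory.Limits

universe w v u

variable {𝒜 : Type u} [Category.{v} 𝒜] [Abelian 𝒜]

/-- A subcategory is closed under extensions if for every short exact sequence
`0 → X₁ → X₂ → X₃ → 0` with `X₁` and `X₃` in it, `X₂` is in it. -/
def ClosedUnderExtensions (N : Set 𝒜) : Prop :=
  ∀ S : ShortComplex 𝒜, S.ShortExact → S.X₁ ∈ N → S.X₃ ∈ N → S.X₂ ∈ N

/-- A subcategory is closed under cokernels if the cokernel of any map between its objects
belongs to it. -/
def ClosedUnderCokernels (N : Set 𝒜) : Prop :=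
  ∀ ⦃X Y : 𝒜⦄ (f : X ⟶ Y), X ∈ N → Y ∈ N → cokernel f ∈ N

/-!
A class in `Ext¹(X, Y)` is a morphism `δ : X[0] ⟶ Y[0][1]` in the derived category. The middle term
of the distinguished triangle `Y[0] ⟶ E ⟶ X[0] ⟶ Y[0][1]` on `δ` lies in the heart, so the triangle
comes from a short exact sequence `0 ⟶ Y ⟶ M ⟶ X ⟶ 0` of class `δ`, and `δ` vanishes exactly when
this sequence splits. Thus `Ext¹(X, Y) = 0` if and only if all extensions of `X` by `Y` split.
For `X` and `I` in `𝒞`, the middle terms of these extensions lie in `𝒞`; conversely, a monomorphism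
`I ⟶ M` in `𝒞` is the start of an extension of its cokernel, which lies in `𝒞`.
-/

section

open Pretriangulated DerivedCategory DerivedCategory.TStructure

variable [HasDerivedCategory.{w} 𝒜]

lemma eq_zero_of_singleFunctor_hom_shift_neg ⦃X Y : 𝒜⦄ ⦃n : ℤ⦄
    (f : (singleFunctor 𝒜 0).obj X ⟶ ((singleFunctor 𝒜 0).obj Y)⟦n⟧) (hn : n < 0) : f = 0 :=
  have := t.isGE_shift ((singleFunctor 𝒜 0).obj Y) 0 n (-n)
  t.zero f 0 (-n)

lemma exists_distTriang_singleFunctor {X Y : 𝒜}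
    (δ : (singleFunctor 𝒜 0).obj X ⟶ ((singleFunctor 𝒜 0).obj Y)⟦(1 : ℤ)⟧) :
    ∃ (M : 𝒜) (i : Y ⟶ M) (q : M ⟶ X),
      Triangle.mk ((singleFunctor 𝒜 0).map i) ((singleFunctor 𝒜 0).map q) δ ∈
        distTriang (DerivedCategory 𝒜) := by
  obtain ⟨E, a, b, hT⟩ := distinguished_cocone_triangle₂ δ
  have : E.IsLE 0 := t.isLE₂ _ hT 0 (inferInstanceAs (((singleFunctor 𝒜 0).obj Y).IsLE 0))
    (inferInstanceAs (((singleFunctor 𝒜 0).obj X).IsLE 0))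
  have : E.IsGE 0 := t.isGE₂ _ hT 0 (inferInstanceAs (((singleFunctor 𝒜 0).obj Y).IsGE 0))
    (inferInstanceAs (((singleFunctor 𝒜 0).obj X).IsGE 0))
  obtain ⟨M, ⟨e⟩⟩ := exists_iso_singleFunctor_obj_of_isGE_of_isLE E 0
  obtain ⟨i, hi⟩ := (singleFunctor 𝒜 0).map_surjective (a ≫ e.hom)
  obtain ⟨q, hq⟩ := (singleFunctor 𝒜 0).map_surjective (e.inv ≫ b)
  have comm₁ : (singleFunctor 𝒜 0).map i ≫ e.inv = 𝟙 _ ≫ a := by simp [hi]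
  have comm₂ : (singleFunctor 𝒜 0).map q ≫ 𝟙 _ = e.inv ≫ b := by simp [hq]
  have comm₃ : δ ≫ (𝟙 ((singleFunctor 𝒜 0).obj Y))⟦(1 : ℤ)⟧' = 𝟙 _ ≫ δ := by simp
  exact ⟨M, i, q, isomorphic_distinguished _ hT _
    (Triangle.isoMk _ _ (Iso.refl _) e.symm (Iso.refl _) comm₁ comm₂ comm₃)⟩

variable {S : ShortComplex 𝒜}
  {δ : (singleFunctor 𝒜 0).obj S.X₃ ⟶ ((singleFunctor 𝒜 0).obj S.X₁)⟦(1 : ℤ)⟧}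

lemma shortExact_of_distTriang_singleFunctor
    (hT : Triangle.mk ((singleFunctor 𝒜 0).map S.f) ((singleFunctor 𝒜 0).map S.g) δ ∈
      distTriang (DerivedCategory 𝒜)) : S.ShortExact where
  exact := S.exact_of_g_is_cokernel
    (Triangulated.AbelianSubcategory.isColimitCokernelCoforkOfDistTriang
      eq_zero_of_singleFunctor_hom_shift_neg _ _ _ hT)
  mono_f := mono_of_isLimit_fork
    (Triangulated.AbelianSubcategory.isLimitKernelForkOfDistTriang
      eq_zero_of_singleFunctor_hom_shift_neg _ _ _ hT)
  epi_g := epi_of_isColimit_cofork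
    (Triangulated.AbelianSubcategory.isColimitCokernelCoforkOfDistTriang
      eq_zero_of_singleFunctor_hom_shift_neg _ _ _ hT)

lemma singleδ_eq_of_distTriang (hS : S.ShortExact)
    (hT : Triangle.mk ((singleFunctor 𝒜 0).map S.f) ((singleFunctor 𝒜 0).map S.g) δ ∈
      distTriang (DerivedCategory 𝒜)) : hS.singleδ = δ := by
  obtain ⟨c, comm₂, comm₃⟩ := complete_distinguished_triangle_morphism _ _
    hS.singleTriangle_distinguished hT (𝟙 _) (𝟙 _)
    ((Category.comp_id _).trans (Category.id_comp _).symm)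
  obtain ⟨γ, rfl⟩ := (singleFunctor 𝒜 0).map_surjective c
  replace comm₂ : (singleFunctor 𝒜 0).map S.g ≫ (singleFunctor 𝒜 0).map γ =
    𝟙 _ ≫ (singleFunctor 𝒜 0).map S.g := comm₂
  replace comm₃ : hS.singleδ ≫ (𝟙 ((singleFunctor 𝒜 0).obj S.X₁))⟦(1 : ℤ)⟧' =
    (singleFunctor 𝒜 0).map γ ≫ δ := comm₃
  -- The endomorphism `γ` of `S.X₃` completing the two identities fixes the epimorphism `S.g`.
  have hγ : γ = 𝟙 S.X₃ := by
    have := hS.epi_g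
    rw [← cancel_epi S.g]
    apply (singleFunctor 𝒜 0).map_injective
    simpa using comm₂
  simpa [hγ] using comm₃

end

section

open Abelian

variable [HasExt.{w} 𝒜]

lemma exists_shortExact_extClass_eq {X Y : 𝒜} (e : Ext X Y 1) :
    ∃ (M : 𝒜) (i : Y ⟶ M) (q : M ⟶ X) (w : i ≫ q = 0)
      (hS : (ShortComplex.mk i q w).ShortExact), hS.extClass = e := by
  let := HasDerivedCategory.standard 𝒜
  obtain ⟨M, i, q, hT⟩ := exists_distTriang_singleFunctor e.hom
  have w : i ≫ q = 0 := (DerivedCategory.singleFunctor 𝒜 0).map_injective (by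
    rw [Functor.map_comp, Functor.map_zero]
    exact Pretriangulated.comp_distTriang_mor_zero₁₂ _ hT)
  have hS : (ShortComplex.mk i q w).ShortExact := shortExact_of_distTriang_singleFunctor hT
  refine ⟨M, i, q, w, hS, ?_⟩
  ext
  rw [hS.extClass_hom, singleδ_eq_of_distTriang hS hT]

lemma extClass_eq_zero_iff_isSplitMono {S : ShortComplex 𝒜} (hS : S.ShortExact) :
    hS.extClass = 0 ↔ IsSplitMono S.f := by
  constructor
  · intro h
    obtain ⟨x, hx⟩ := Ext.contravariant_sequence_exact₁ hS S.X₁ (Ext.mk₀ (𝟙 S.X₁)) (add_zero 1)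
      (by rw [h, Ext.zero_comp])
    obtain ⟨r, rfl⟩ := (Ext.mk₀_bijective _ _).2 x
    rw [Ext.mk₀_comp_mk₀] at hx
    exact .mk' ⟨r, (Ext.mk₀_bijective _ _).1 hx⟩
  · intro h
    calc hS.extClass
      _ = hS.extClass.comp (Ext.mk₀ (S.f ≫ retraction S.f)) (add_zero 1) := by simp
      _ = 0 := by rw [← Ext.mk₀_comp_mk₀, hS.extClass_comp_assoc]

lemma forall_ext_one_eq_zero_iff_forall_isSplitMono {X Y : 𝒜} :
    (∀ e : Ext X Y 1, e = 0) ↔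
      ∀ (M : 𝒜) (i : Y ⟶ M) (q : M ⟶ X) (w : i ≫ q = 0),
        (ShortComplex.mk i q w).ShortExact → IsSplitMono i := by
  constructor
  · intro h M i q w hS
    exact (extClass_eq_zero_iff_isSplitMono hS).1 (h _)
  · intro h e
    obtain ⟨M, i, q, w, hS, rfl⟩ := exists_shortExact_extClass_eq e
    exact (extClass_eq_zero_iff_isSplitMono hS).2 (h M i q w hS)

end

theorem splitInjective_iff_extInjective_general [HasExt.{w} 𝒜]
    (𝒞 : Set 𝒜) (hext : ClosedUnderExtensions 𝒞)
    (hcoker : ∀ ⦃X Y : 𝒜⦄ (f : X ⟶ Y) [Mono f], X ∈ 𝒞 → Y ∈ 𝒞 → cokernel f ∈ 𝒞)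
    (I : 𝒜) (hI : I ∈ 𝒞) :
    (∀ M ∈ 𝒞, ∀ f : I ⟶ M, Mono f → ∃ r : M ⟶ I, f ≫ r = 𝟙 I) ↔
      (∀ X ∈ 𝒞, ∀ e : Abelian.Ext X I 1, e = 0) := by
  constructor
  · intro hsplit X hX
    refine forall_ext_one_eq_zero_iff_forall_isSplitMono.2 fun M i q w hS ↦ ?_
    obtain ⟨r, hr⟩ := hsplit M (hext _ hS hI hX) i hS.mono_f
    exact .mk' ⟨r, hr⟩
  · intro hzero M hM f _
    have hS : (ShortComplex.mk f (cokernel.π f) (cokernel.condition f)).ShortExact :=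
      { exact := ShortComplex.exact_cokernel f }
    have : IsSplitMono f := forall_ext_one_eq_zero_iff_forall_isSplitMono.1
      (hzero _ (hcoker f hI hM)) M f _ _ hS
    exact ⟨retraction f, IsSplitMono.id f⟩

theorem splitInjective_iff_extInjective [HasExt.{w} 𝒜]
    (𝒞 : Set 𝒜) (hext : ClosedUnderExtensions 𝒞) (hcoker : ClosedUnderCokernels 𝒞)
    (I : 𝒜) (hI : I ∈ 𝒞) :
    (∀ M ∈ 𝒞, ∀ f : I ⟶ M, Mono f → ∃ r : M ⟶ I, f ≫ r = 𝟙 I) ↔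
      (∀ X ∈ 𝒞, ∀ e : Abelian.Ext X I 1, e = 0) :=
  splitInjective_iff_extInjective_general 𝒞 hext (fun _ _ f _ ↦ hcoker f) I hI
end

section
/- Let 𝒜 be a hereditary abelian category and 𝒩 a narrow subcategory of 𝒜. Then 𝒩 is closed under images: for any morphism f : A → B with A, B ∈ 𝒩, the image of f lies in 𝒩. -/
/-!
STATEMENT 2: Let 𝒜 be a hereditary abelian category and 𝒩 a narrow subcategory of 𝒜
(a full subcategory closed under extensions and cokernels).  Then 𝒩 is closed under images:
for any morphism `f : A ⟶ B` with `A, B ∈ 𝒩`, the image of `f` lies in 𝒩.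
-/

open CategoryTheory CategoryTheory.Limits

universe w v u

variable {𝒜 : Type u} [Category.{v} 𝒜] [Abelian 𝒜]

/-- A subcategory (given by its set of objects) is replete, i.e. closed under isomorphisms. -/
def Replete (N : Set 𝒜) : Prop := ∀ ⦃X Y : 𝒜⦄, X ∈ N → (X ≅ Y) → Y ∈ N

/-- A subcategory is closed under kernels if the kernel of any map between its objects
belongs to it. -/
def ClosedUnderKernels (N : Set 𝒜) : Prop :=
  ∀ ⦃X Y : 𝒜⦄ (f : X ⟶ Y), X ∈ N → Y ∈ N → kernel f ∈ N

/-- A narrow subcategory: a (replete) full subcategory closed under extensions and cokernels. -/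
def IsNarrow (N : Set 𝒜) : Prop :=
  Replete N ∧ ClosedUnderExtensions N ∧ ClosedUnderCokernels N

variable [HasExt.{w} 𝒜]

/-- An abelian category is hereditary if `Ext²(A, B) = 0` for all objects `A`, `B`
(equivalently, it has global dimension at most one). -/
def Hereditary : Prop := ∀ ⦃X Y : 𝒜⦄ (e : Abelian.Ext X Y 2), e = 0

/-!
Factor `f` as `A ↠ I ↪ B`, with kernel `K` and cokernel `Q`. The class of `0 → I → B → Q → 0` in
`Ext¹(Q, I)` maps to `Ext²(Q, K) = 0`, so it lifts to `Ext¹(Q, A)`. The lift is realised, by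
a cone in the derived category, as the class of an extension `0 → A → E → Q → 0` mapping to
`0 → I → B → Q → 0` over the identity of `Q`. The left square of this map is bicartesian, which
gives a short exact sequence `0 → A → E ⊞ I → B → 0`. Hence `E ⊞ I` is in `𝒩`, and so is `I`, since
a retract is the cokernel of an idempotent.
-/

section Exactness

variable {C : Type*} [Category* C] [Abelian C] {S T : ShortComplex C} (φ : S ⟶ T)

lemma isPullback_of_mono_τ₃ [Mono S.f] [Mono T.f] (hS : S.Exact) [Mono φ.τ₃] :
    IsPullback S.f φ.τ₁ φ.τ₂ T.f := by
  have comp_g_eq_zero (s : PullbackCone φ.τ₂ T.f) : s.fst ≫ S.g = 0 := by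
    rw [← cancel_mono φ.τ₃, Category.assoc, ← φ.comm₂₃, s.condition_assoc, T.zero, comp_zero,
      zero_comp]
  refine ⟨⟨φ.comm₁₂.symm⟩, ⟨PullbackCone.IsLimit.mk _ (fun s ↦ hS.lift s.fst (comp_g_eq_zero s))
    (fun s ↦ hS.lift_f _ _) (fun s ↦ ?_) (fun s m hm _ ↦ ?_)⟩⟩
  · rw [← cancel_mono T.f, Category.assoc, φ.comm₁₂, hS.lift_f_assoc, s.condition]
  · rw [← cancel_mono S.f, hm, hS.lift_f]

lemma epi_biprod_desc_neg_of_epi_τ₃ [Epi S.g] [Epi T.g] (hT : T.Exact) [Epi φ.τ₃] :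
    Epi (biprod.desc φ.τ₂ (-T.f)) := by
  refine Preadditive.epi_of_cancel_zero _ fun z hz ↦ ?_
  have hτ₂ : φ.τ₂ ≫ z = 0 := by simpa using biprod.inl ≫= hz
  have hf : T.f ≫ z = 0 := by simpa using biprod.inr ≫= hz
  obtain ⟨d, rfl⟩ : ∃ d, T.g ≫ d = z := ⟨_, hT.g_desc z hf⟩
  have hd : d = 0 := by
    rw [← cancel_epi φ.τ₃, ← cancel_epi S.g, ← φ.comm₂₃_assoc, hτ₂, comp_zero, comp_zero]
  rw [hd, comp_zero]

lemma shortExact_shortComplex'_of_isIso_τ₃ (hS : S.ShortExact) (hT : T.ShortExact)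
    [IsIso φ.τ₃] (sq : CommSq S.f φ.τ₁ φ.τ₂ T.f) : sq.shortComplex'.ShortExact := by
  have := hS.mono_f
  have := hS.epi_g
  have := hT.mono_f
  have := hT.epi_g
  have isPullback := isPullback_of_mono_τ₃ φ hS.exact
  exact
    { exact := isPullback.exact_shortComplex'
      mono_f := isPullback.mono_shortComplex'_f
      epi_g := epi_biprod_desc_neg_of_epi_τ₃ φ hT.exact }

lemma shortExact_kernel_image {A B : C} (f : A ⟶ B) :
    (ShortComplex.mk (kernel.ι f) (factorThruImage f)
      (comp_factorThruImage_eq_zero (kernel.condition f))).ShortExact where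
  exact := by
    let φ : ShortComplex.mk (kernel.ι f) (factorThruImage f)
        (comp_factorThruImage_eq_zero (kernel.condition f)) ⟶
          ShortComplex.mk _ _ (kernel.condition f) :=
      { τ₁ := 𝟙 _, τ₂ := 𝟙 _, τ₃ := image.ι f }
    have : Epi φ.τ₁ := inferInstanceAs (Epi (𝟙 _))
    have : IsIso φ.τ₂ := inferInstanceAs (IsIso (𝟙 _))
    have : Mono φ.τ₃ := inferInstanceAs (Mono (image.ι f))
    exact (ShortComplex.exact_iff_of_epi_of_isIso_of_mono φ).2 (ShortComplex.exact_kernel f)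

lemma shortExact_image_cokernel {A B : C} (f : A ⟶ B) :
    (ShortComplex.mk (image.ι f) (cokernel.π f)
      (image_ι_comp_eq_zero (cokernel.condition f))).ShortExact where
  exact := by
    let φ : ShortComplex.mk _ _ (cokernel.condition f) ⟶
        ShortComplex.mk (image.ι f) (cokernel.π f)
          (image_ι_comp_eq_zero (cokernel.condition f)) :=
      { τ₁ := factorThruImage f, τ₂ := 𝟙 _, τ₃ := 𝟙 _ }
    have : Epi φ.τ₁ := inferInstanceAs (Epi (factorThruImage f))
    have : IsIso φ.τ₂ := inferInstanceAs (IsIso (𝟙 _))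
    have : Mono φ.τ₃ := inferInstanceAs (Mono (𝟙 _))
    exact (ShortComplex.exact_iff_of_epi_of_isIso_of_mono φ).1 (ShortComplex.exact_cokernel f)

end Exactness

section DerivedCategory

open DerivedCategory Pretriangulated

variable {C : Type*} [Category* C] [Abelian C] [HasDerivedCategory C]

lemma exists_iso_singleFunctor_obj_of_distinguished {K L M : DerivedCategory C}
    {α : K ⟶ L} {β : L ⟶ M} {δ : M ⟶ K⟦(1 : ℤ)⟧}
    (hT : Triangle.mk α β δ ∈ distTriang (DerivedCategory C)) (n : ℤ)
    [K.IsGE n] [K.IsLE n] [M.IsGE n] [M.IsLE n] :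
    ∃ Y : C, Nonempty (L ≅ (singleFunctor C n).obj Y) := by
  have : L.IsGE n := (isGE_iff _ n).2 fun i hi ↦
    (HomologySequence.exact₂ _ hT i).isZero_X₂
      ((isZero_of_isGE K n i hi).eq_of_src _ _) ((isZero_of_isGE M n i hi).eq_of_tgt _ _)
  have : L.IsLE n := (isLE_iff _ n).2 fun i hi ↦
    (HomologySequence.exact₂ _ hT i).isZero_X₂
      ((isZero_of_isLE K n i hi).eq_of_src _ _) ((isZero_of_isLE M n i hi).eq_of_tgt _ _)
  exact exists_iso_singleFunctor_obj_of_isGE_of_isLE _ n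

lemma shortExact_of_singleFunctor_distinguished {S : ShortComplex C} {n : ℤ}
    {δ : (singleFunctor C n).obj S.X₃ ⟶ ((singleFunctor C n).obj S.X₁)⟦(1 : ℤ)⟧}
    (hT : Triangle.mk ((singleFunctor C n).map S.f) ((singleFunctor C n).map S.g) δ ∈
      distTriang (DerivedCategory C)) :
    S.ShortExact := by
  have shortExact_homology :
      (S.map (singleFunctor C n ⋙ homologyFunctor C n)).ShortExact :=
    { exact := HomologySequence.exact₂ _ hT n
      mono_f := (HomologySequence.mono_homologyMap_mor₁_iff _ hT (n - 1) n).2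
        ((isZero_of_isGE ((singleFunctor C n).obj S.X₃) n (n - 1) (by lia)).eq_of_src _ _)
      epi_g := (HomologySequence.epi_homologyMap_mor₂_iff _ hT n (n + 1)).2
        ((isZero_of_isLE ((singleFunctor C n).obj S.X₁) n (n + 1) (by lia)).eq_of_tgt _ _) }
  exact (ShortComplex.shortExact_iff_of_iso
    (S.mapNatIso (singleFunctorCompHomologyFunctorIso C n))).1 shortExact_homology

lemma exists_shortExact_distinguished {X Z : C} {n : ℤ}
    (δ : (singleFunctor C n).obj Z ⟶ ((singleFunctor C n).obj X)⟦(1 : ℤ)⟧) :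
    ∃ (Y : C) (f : X ⟶ Y) (g : Y ⟶ Z) (w : f ≫ g = 0), (ShortComplex.mk f g w).ShortExact ∧
      Triangle.mk ((singleFunctor C n).map f) ((singleFunctor C n).map g) δ ∈
        distTriang (DerivedCategory C) := by
  let F := singleFunctor C n
  obtain ⟨M, α, β, hM⟩ := distinguished_cocone_triangle₂ δ
  obtain ⟨Y, ⟨e⟩⟩ := exists_iso_singleFunctor_obj_of_distinguished hM n
  obtain ⟨f, hf⟩ := F.map_surjective (α ≫ e.hom)
  obtain ⟨g, hg⟩ := F.map_surjective (e.inv ≫ β)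
  have comm₁ : F.map f ≫ e.inv = 𝟙 (F.obj X) ≫ α := by simp [hf]
  have comm₂ : F.map g ≫ 𝟙 (F.obj Z) = e.inv ≫ β := by simp [hg]
  have comm₃ : δ ≫ (𝟙 (F.obj X))⟦(1 : ℤ)⟧' = 𝟙 (F.obj Z) ≫ δ := by
    rw [CategoryTheory.Functor.map_id, Category.id_comp]
    exact Category.comp_id δ
  have hT : Triangle.mk (F.map f) (F.map g) δ ∈ distTriang (DerivedCategory C) :=
    isomorphic_distinguished _ hM _
      (Triangle.isoMk _ _ (Iso.refl (F.obj X)) e.symm (Iso.refl (F.obj Z))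
        comm₁ comm₂ comm₃)
  have w : f ≫ g = 0 := F.map_injective (by
    rw [F.map_comp, F.map_zero]
    exact comp_distTriang_mor_zero₁₂ _ hT)
  exact ⟨Y, f, g, w, shortExact_of_singleFunctor_distinguished (S := .mk f g w) hT, hT⟩

lemma singleδ_eq_of_distinguished {S : ShortComplex C} (hS : S.ShortExact)
    {δ : (singleFunctor C 0).obj S.X₃ ⟶ ((singleFunctor C 0).obj S.X₁)⟦(1 : ℤ)⟧}
    (hT : Triangle.mk ((singleFunctor C 0).map S.f) ((singleFunctor C 0).map S.g) δ ∈
      distTriang (DerivedCategory C)) :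
    hS.singleδ = δ := by
  let F := singleFunctor C 0
  obtain ⟨γ, hγ, hδ⟩ : ∃ γ : F.obj S.X₃ ⟶ F.obj S.X₃,
      F.map S.g ≫ γ = 𝟙 (F.obj S.X₂) ≫ F.map S.g ∧
        hS.singleδ ≫ (𝟙 (F.obj S.X₁))⟦(1 : ℤ)⟧' = γ ≫ δ :=
    complete_distinguished_triangle_morphism _ _ hS.singleTriangle_distinguished hT
      (𝟙 (F.obj S.X₁)) (𝟙 (F.obj S.X₂))
      ((Category.comp_id _).trans (Category.id_comp _).symm)
  obtain ⟨c, rfl⟩ := F.map_surjective γ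
  have := hS.epi_g
  have hc : c = 𝟙 S.X₃ := by
    rw [← cancel_epi S.g]
    exact F.map_injective (by simpa using hγ)
  simpa [hc, F] using hδ

end DerivedCategory

section Retracts

variable {C : Type*} [Category* C]

/-- A retract `Y` of `X` is the cokernel of the idempotent of `X` complementary to the one
that `Y` splits; this makes subcategories closed under cokernels closed under retracts. -/
noncomputable def retractIsoCokernel [Preadditive C] {X Y : C} (h : Retract Y X)
    [HasCokernel (𝟙 X - h.r ≫ h.i)] : cokernel (𝟙 X - h.r ≫ h.i) ≅ Y where
  hom := cokernel.desc _ h.r (by simp)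
  inv := h.i ≫ cokernel.π _
  hom_inv_id := by
    ext
    have hπ : cokernel.π (𝟙 X - h.r ≫ h.i) = h.r ≫ h.i ≫ cokernel.π (𝟙 X - h.r ≫ h.i) := by
      simpa only [Preadditive.sub_comp, Category.id_comp, Category.assoc, sub_eq_zero] using
        cokernel.condition (𝟙 X - h.r ≫ h.i)
    simpa using hπ.symm

lemma ClosedUnderCokernels.isStableUnderRetracts [Abelian C] {N : Set C}
    (hcok : ClosedUnderCokernels N) (hrep : Replete N) :
    ObjectProperty.IsStableUnderRetracts (· ∈ N) where
  of_retract h hX := hrep (hcok _ hX hX) (retractIsoCokernel h)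

end Retracts

section Ext

open Abelian

variable {C : Type*} [Category* C] [Abelian C] [HasExt.{w} C]

lemma exists_shortExact_extClass_eq_s2 {X Z : C} (x : Ext Z X 1) :
    ∃ (Y : C) (f : X ⟶ Y) (g : Y ⟶ Z) (w : f ≫ g = 0)
      (h : (ShortComplex.mk f g w).ShortExact), h.extClass = x := by
  let := HasDerivedCategory.standard C
  obtain ⟨Y, f, g, w, h, hT⟩ := exists_shortExact_distinguished x.hom
  refine ⟨Y, f, g, w, h, ?_⟩
  ext
  rw [h.extClass_hom]
  exact singleδ_eq_of_distinguished h hT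

lemma exists_hom_of_extClass_comp_eq {S T : ShortComplex C} (hS : S.ShortExact)
    (hT : T.ShortExact) (α : S.X₁ ⟶ T.X₁) (γ : S.X₃ ⟶ T.X₃)
    (h : hS.extClass.comp (Ext.mk₀ α) (add_zero 1) =
      (Ext.mk₀ γ).comp hT.extClass (zero_add 1)) :
    ∃ φ : S ⟶ T, φ.τ₁ = α ∧ φ.τ₃ = γ := by
  let := HasDerivedCategory.standard C
  let F := DerivedCategory.singleFunctor C 0
  have comm : hS.singleδ ≫ (F.map α)⟦(1 : ℤ)⟧' = F.map γ ≫ hT.singleδ := by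
    simpa [ShiftedHom.comp_mk₀, ShiftedHom.mk₀_comp] using! congr_arg Ext.hom h
  obtain ⟨β, hf, hg⟩ : ∃ β : F.obj S.X₂ ⟶ F.obj T.X₂,
      F.map S.f ≫ β = F.map α ≫ F.map T.f ∧ F.map S.g ≫ F.map γ = β ≫ F.map T.g :=
    Pretriangulated.complete_distinguished_triangle_morphism₂ _ _
      hS.singleTriangle_distinguished hT.singleTriangle_distinguished (F.map α) (F.map γ) comm
  obtain ⟨b, rfl⟩ := F.map_surjective β
  exact ⟨{
    τ₁ := α
    τ₂ := b
    τ₃ := γ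
    comm₁₂ := F.map_injective (by simpa using hf.symm)
    comm₂₃ := F.map_injective (by simpa using hg.symm) }, rfl, rfl⟩

lemma exists_shortExact_biprod_of_extClass_comp_eq_zero {S : ShortComplex C} (hS : S.ShortExact)
    {B Q : C} {i : S.X₃ ⟶ B} {q : B ⟶ Q} {w : i ≫ q = 0}
    (hT : (ShortComplex.mk i q w).ShortExact)
    (h : hT.extClass.comp hS.extClass one_add_one_eq_two = 0) :
    ∃ (E : C) (u : S.X₂ ⟶ E ⊞ S.X₃) (v : E ⊞ S.X₃ ⟶ B) (w' : u ≫ v = 0),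
      (ShortComplex.mk u v w').ShortExact := by
  obtain ⟨x, hx⟩ := Ext.covariant_sequence_exact₃ _ hS hT.extClass _ h
  obtain ⟨E, a, b, _, hE, rfl⟩ := exists_shortExact_extClass_eq_s2 x
  obtain ⟨φ, _, hφ₃⟩ := exists_hom_of_extClass_comp_eq hE hT S.g (𝟙 Q) (by simpa using hx)
  have : IsIso φ.τ₃ := hφ₃ ▸ inferInstance
  exact ⟨E, _, _, _, shortExact_shortComplex'_of_isIso_τ₃ φ hE hT ⟨φ.comm₁₂.symm⟩⟩

theorem narrow_closed_under_images_general {P : ObjectProperty C} [P.IsClosedUnderExtensions]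
    [P.IsStableUnderRetracts] {A B : C} (f : A ⟶ B)
    (hf : ∀ e : Ext (cokernel f) (kernel f) 2, e = 0) (hA : P A) (hB : P B) :
    P (image f) := by
  obtain ⟨E, _, _, _, h⟩ := exists_shortExact_biprod_of_extClass_comp_eq_zero
    (shortExact_kernel_image f) (shortExact_image_cokernel f) (hf _)
  have hE : P (E ⊞ image f) := P.prop_X₂_of_shortExact h hA hB
  exact P.prop_of_retract { i := biprod.inr, r := biprod.snd } hE

end Ext

theorem narrow_closed_under_images
    (hher : Hereditary (𝒜 := 𝒜)) (𝒩 : Set 𝒜) (h𝒩 : IsNarrow 𝒩)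
    {A B : 𝒜} (f : A ⟶ B) (hA : A ∈ 𝒩) (hB : B ∈ 𝒩) :
    image f ∈ 𝒩 := by
  obtain ⟨hrep, hext, hcok⟩ := h𝒩
  have : ObjectProperty.IsClosedUnderExtensions (· ∈ 𝒩) := ⟨hext _⟩
  have := hcok.isStableUnderRetracts hrep
  exact narrow_closed_under_images_general (P := (· ∈ 𝒩)) f (fun e ↦ hher e) hA hB
end

section
/- Let 𝒰 and 𝒱 be preaisles in a triangulated category 𝒯 such that Hom(U[n], V) = 0 for all U ∈ 𝒰, V ∈ 𝒱, n ∈ ℤ (i.e. 𝒰 ⊆ ⊥𝒱). Then 𝒰 ∗ 𝒱 is a preaisle. -/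
/-!
STATEMENT 10: Let 𝒰 and 𝒱 be preaisles in a triangulated category 𝒯 such that
Hom(U[n], V) = 0 for all U ∈ 𝒰, V ∈ 𝒱, n ∈ ℤ (i.e. 𝒰 ⊆ ⊥𝒱).  Then 𝒰 ∗ 𝒱 is a preaisle.
-/

open CategoryTheory CategoryTheory.Limits CategoryTheory.Pretriangulated

universe v u

variable {𝒯 : Type u} [Category.{v} 𝒯] [Preadditive 𝒯] [HasZeroObject 𝒯] [HasShift 𝒯 ℤ]
  [∀ n : ℤ, (CategoryTheory.shiftFunctor 𝒯 n).Additive] [Pretriangulated 𝒯] [IsTriangulated 𝒯]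

/-- A preaisle in a triangulated category: a full subcategory closed under suspension and
under extensions. -/
def IsPreaisle (U : Set 𝒯) : Prop :=
  (∀ X ∈ U, X⟦(1 : ℤ)⟧ ∈ U) ∧
  (∀ T : Triangle 𝒯, (T ∈ distTriang 𝒯) → T.obj₁ ∈ U → T.obj₃ ∈ U → T.obj₂ ∈ U)

/-- `𝒰 ∗ 𝒱`: the full subcategory of objects `X` occurring in a distinguished triangle
`U → X → V → U⟦1⟧` with `U ∈ 𝒰` and `V ∈ 𝒱`. -/
def star (U V : Set 𝒯) : Set 𝒯 :=
  {X | ∃ (A B : 𝒯) (f : A ⟶ X) (g : X ⟶ B) (h : B ⟶ A⟦(1 : ℤ)⟧),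
    (Triangle.mk f g h ∈ distTriang 𝒯) ∧ A ∈ U ∧ B ∈ V}

/-!
Since `𝒱` is closed under suspension, the orthogonality also kills every morphism `U ⟶ V⟦1⟧` with
`U ∈ 𝒰` and `V ∈ 𝒱`. So every extension of `U` by `V` splits, and exchanging the summands of
`V ⊞ U` gives `𝒱 ∗ 𝒰 ⊆ 𝒰 ∗ 𝒱`. The octahedral axiom makes `∗` associative, whence
`(𝒰 ∗ 𝒱) ∗ (𝒰 ∗ 𝒱) = 𝒰 ∗ (𝒱 ∗ 𝒰) ∗ 𝒱 ⊆ (𝒰 ∗ 𝒰) ∗ (𝒱 ∗ 𝒱) ⊆ 𝒰 ∗ 𝒱`.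
-/

section

variable {C : Type*} [Category* C] [Preadditive C] [HasZeroObject C] [HasShift C ℤ]
  [∀ n : ℤ, (shiftFunctor C n).Additive] [Pretriangulated C] {U U' V V' : Set C}

lemma star_subset_star (hU : U ⊆ U') (hV : V ⊆ V') : star U V ⊆ star U' V' :=
  fun _ ⟨A, B, f, g, h, hT, hA, hB⟩ => ⟨A, B, f, g, h, hT, hU hA, hV hB⟩

lemma mem_star_of_iso {X Y : C} (e : X ≅ Y) (hX : X ∈ star U V) : Y ∈ star U V :=
  -- `star U V` unfolds to the extension product of the membership predicates.
  (ObjectProperty.extensionProduct (· ∈ U) (· ∈ V)).prop_of_iso e hX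

lemma biprod_mem_star {A B : C} (hA : A ∈ U) (hB : B ∈ V) : (A ⊞ B) ∈ star U V :=
  ⟨A, B, _, _, _, binaryBiproductTriangle_distinguished A B, hA, hB⟩

lemma star_assoc [IsTriangulated C] (U V W : Set C) :
    star (star U V) W = star U (star V W) :=
  ObjectProperty.extensionProduct_assoc (· ∈ U) (· ∈ V) (· ∈ W)

lemma shift_mem_star {n : ℤ} (hU : ∀ A ∈ U, A⟦n⟧ ∈ U') (hV : ∀ B ∈ V, B⟦n⟧ ∈ V') {X : C}
    (hX : X ∈ star U V) : X⟦n⟧ ∈ star U' V' := by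
  obtain ⟨A, B, f, g, h, hT, hA, hB⟩ := hX
  exact ⟨_, _, _, _, _, Triangle.shift_distinguished _ hT n, hU A hA, hV B hB⟩

lemma star_subset_star_swap (hzero : ∀ A ∈ U, ∀ B ∈ V, ∀ f : B ⟶ A⟦(1 : ℤ)⟧, f = 0) :
    star U V ⊆ star V U := by
  rintro X ⟨A, B, f, g, h, hT, hA, hB⟩
  obtain ⟨e, -⟩ := exists_iso_binaryBiproduct_of_distTriang _ hT (hzero A hA B hB h)
  exact mem_star_of_iso (e ≪≫ biprod.braiding A B).symm (biprod_mem_star hB hA)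

lemma star_star_self_subset [IsTriangulated C] (hU : star U U ⊆ U) (hV : star V V ⊆ V)
    (hVU : star V U ⊆ star U V) : star (star U V) (star U V) ⊆ star U V :=
  calc
    star (star U V) (star U V) = star U (star (star V U) V) := by simp only [star_assoc]
    _ ⊆ star U (star (star U V) V) := star_subset_star subset_rfl (star_subset_star hVU subset_rfl)
    _ = star (star U U) (star V V) := by simp only [star_assoc]
    _ ⊆ star U V := star_subset_star hU hV

lemma isPreaisle_iff_star_self_subset :
    IsPreaisle U ↔ (∀ X ∈ U, X⟦(1 : ℤ)⟧ ∈ U) ∧ star U U ⊆ U :=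
  and_congr_right fun _ =>
    ⟨fun hext _ ⟨_, _, _, _, _, hT, hA, hB⟩ => hext _ hT hA hB,
      fun hstar _ hT h₁ h₃ => hstar ⟨_, _, _, _, _, hT, h₁, h₃⟩⟩

theorem star_isPreaisle_general [IsTriangulated C] (hU : IsPreaisle U) (hV : IsPreaisle V)
    (hVU : star V U ⊆ star U V) : IsPreaisle (star U V) := by
  rw [isPreaisle_iff_star_self_subset] at hU hV ⊢
  exact ⟨fun _ => shift_mem_star hU.1 hV.1, star_star_self_subset hU.2 hV.2 hVU⟩

end

theorem star_isPreaisle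
    (𝒰 𝒱 : Set 𝒯) (h𝒰 : IsPreaisle 𝒰) (h𝒱 : IsPreaisle 𝒱)
    (hperp : ∀ U ∈ 𝒰, ∀ V ∈ 𝒱, ∀ n : ℤ, ∀ f : U⟦n⟧ ⟶ V, f = 0) :
    IsPreaisle (star 𝒰 𝒱) := by
  refine star_isPreaisle_general h𝒰 h𝒱 (star_subset_star_swap fun V hV U hU f => ?_)
  have hf : (shiftFunctorZero 𝒯 ℤ).hom.app U ≫ f = 0 := hperp U hU _ (h𝒱.1 V hV) 0 _
  exact (Preadditive.IsIso.comp_left_eq_zero _ f).1 hf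
end

section
/- Let 𝒜 be a hereditary abelian category and ℬ a full abelian subcategory of 𝒜 (a full subcategory closed under kernels, cokernels, and extensions), and let D^b(ℬ) denote the full subcategory of D^b(𝒜) of complexes all of whose homologies lie in ℬ. Then D^b(ℬ^⊥) = (D^b ℬ)^⊥ and D^b(⊥ℬ) = ⊥(D^b ℬ), where for subcategories of 𝒜 we set ℬ^⊥ = {A ∈ 𝒜 : Hom(B, A) = 0 and Ext¹(B, A) = 0 for all B ∈ ℬ} (and ⊥ℬ dually), and for a subcategory 𝒮 of D^b(𝒜) we set 𝒮^⊥ = {X : Hom(S, X[n]) = 0 for all S ∈ 𝒮, n ∈ ℤ} (and ⊥𝒮 dually). -/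
/-!
STATEMENT 14: Let 𝒜 be a hereditary abelian category and ℬ a full abelian subcategory of 𝒜
(a full subcategory closed under kernels, cokernels, and extensions), and let D^b(ℬ) denote
the full subcategory of D^b(𝒜) of complexes all of whose homologies lie in ℬ.  Then
D^b(ℬ^⊥) = (D^b ℬ)^⊥ and D^b(⊥ℬ) = ⊥(D^b ℬ), where
ℬ^⊥ = {A ∈ 𝒜 : Hom(B, A) = 0 and Ext¹(B, A) = 0 for all B ∈ ℬ} (and ⊥ℬ dually), and for
a subcategory 𝒮 of D^b(𝒜), 𝒮^⊥ = {X : Hom(S, X[n]) = 0 for all S ∈ 𝒮, n ∈ ℤ}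
(and ⊥𝒮 dually).
-/

open CategoryTheory CategoryTheory.Limits CategoryTheory.Pretriangulated

universe w' w v u

variable {𝒜 : Type u} [Category.{v} 𝒜] [Abelian 𝒜] [HasDerivedCategory.{w} 𝒜]

/-- A wide (= full abelian) subcategory: a (replete) full subcategory closed under kernels,
cokernels and extensions. -/
def IsWide (W : Set 𝒜) : Prop :=
  Replete W ∧ ClosedUnderKernels W ∧ ClosedUnderCokernels W ∧ ClosedUnderExtensions W

/-- The `k`-th homology functor, in homological convention: `H_k = H^{-k}`. -/
noncomputable abbrev Hgy (k : ℤ) : DerivedCategory 𝒜 ⥤ 𝒜 :=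
  DerivedCategory.homologyFunctor 𝒜 (-k)

/-- `A ↦ A[k]`: the stalk complex concentrated in (homological) degree `k`. -/
noncomputable abbrev single (k : ℤ) : 𝒜 ⥤ DerivedCategory 𝒜 :=
  DerivedCategory.singleFunctor 𝒜 (-k)

/-- The bounded derived category `D^b(𝒜)`, realized as the full (replete) subcategory of
the derived category consisting of the complexes with bounded homology. -/
def Db : Set (DerivedCategory 𝒜) :=
  {X | ∃ a b : ℤ, ∀ n : ℤ, (n < a ∨ b < n) → IsZero ((Hgy (𝒜 := 𝒜) n).obj X)}

lemma isZero_homology_single (X : 𝒜) (k n : ℤ) (hn : n ≠ k) :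
    IsZero ((Hgy (𝒜 := 𝒜) n).obj ((single (𝒜 := 𝒜) k).obj X)) := by
  have e1 : (DerivedCategory.singleFunctor 𝒜 (-k)).obj X ≅
      DerivedCategory.Q.obj ((CochainComplex.singleFunctor 𝒜 (-k)).obj X) :=
    ((SingleFunctors.evaluation _ _ (-k)).mapIso
      (DerivedCategory.singleFunctorsPostcompQIso 𝒜)).app X
  have e2 := (DerivedCategory.homologyFunctorFactors 𝒜 (-n)).app
    ((CochainComplex.singleFunctor 𝒜 (-k)).obj X)
  refine IsZero.of_iso ?_ ((DerivedCategory.homologyFunctor 𝒜 (-n)).mapIso e1 ≪≫ e2)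
  exact HomologicalComplex.isZero_single_obj_homology _ _ _ _ (by omega)

lemma single_mem_Db (X : 𝒜) (k : ℤ) : (single (𝒜 := 𝒜) k).obj X ∈ Db (𝒜 := 𝒜) :=
  ⟨k, k, fun n hn => isZero_homology_single X k n (by omega)⟩

/-- `D^b(ℬ)`: the full subcategory of `D^b(𝒜)` of complexes all of whose homologies lie
in ℬ. -/
def DbOf (ℬ : Set 𝒜) : Set (DerivedCategory 𝒜) :=
  {X | X ∈ Db (𝒜 := 𝒜) ∧ ∀ k : ℤ, (Hgy (𝒜 := 𝒜) k).obj X ∈ ℬ}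

variable [HasExt.{w'} 𝒜]

/-- `ℬ^⊥` in 𝒜. -/
def rightPerpAb (ℬ : Set 𝒜) : Set 𝒜 :=
  {A : 𝒜 | ∀ B ∈ ℬ, (∀ f : B ⟶ A, f = 0) ∧ (∀ e : Abelian.Ext B A 1, e = 0)}

/-- `⊥ℬ` in 𝒜. -/
def leftPerpAb (ℬ : Set 𝒜) : Set 𝒜 :=
  {A : 𝒜 | ∀ B ∈ ℬ, (∀ f : A ⟶ B, f = 0) ∧ (∀ e : Abelian.Ext A B 1, e = 0)}

/-- `𝒮^⊥` in `D^b(𝒜)`. -/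
def rightPerpDb (𝒮 : Set (DerivedCategory 𝒜)) : Set (DerivedCategory 𝒜) :=
  {X | X ∈ Db (𝒜 := 𝒜) ∧ ∀ S ∈ 𝒮, ∀ n : ℤ, ∀ f : S ⟶ X⟦n⟧, f = 0}

/-- `⊥𝒮` in `D^b(𝒜)`. -/
def leftPerpDb (𝒮 : Set (DerivedCategory 𝒜)) : Set (DerivedCategory 𝒜) :=
  {X | X ∈ Db (𝒜 := 𝒜) ∧ ∀ S ∈ 𝒮, ∀ n : ℤ, ∀ f : X⟦n⟧ ⟶ S, f = 0}

/-!
An object of the bounded derived category is an iterated extension of the stalks of its homologies.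
Over a hereditary category there are no nonzero morphisms from a stalk in degree at least `b + 2` to
a stalk in degree `b`, so the connecting morphism `τ_{≥n} X ⟶ (τ_{<n} X)⟦1⟧` of every truncation
triangle vanishes and the stalks of the homologies of `X` are even retracts of `X`. Consequently
`Hom(X, Y⟦n⟧)` vanishes for all `n` if and only if `Hom` and `Ext¹` vanish from every homology of
`X` to every homology of `Y`. The perpendicular categories are compared by testing on stalks.

Vanishing of `Ext²` passes to higher degrees without enough projectives: a class of positive degree
is killed by an epimorphism onto its source, hence comes from the kernel in one degree less.
-/

section

variable {C : Type*} [Category* C]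

/-- Hom-orthogonality: every morphism from `X` to `Y` is zero. It is stated without bundling `Hom`
into a group, so that it applies verbatim to the conditions `f = 0` defining perpendiculars. -/
def HomVanish [HasZeroMorphisms C] (X Y : C) : Prop :=
  ∀ f : X ⟶ Y, f = 0

namespace HomVanish

lemma of_retract [HasZeroMorphisms C] {X X' Y Y' : C} (h : HomVanish X Y) (r : Retract X' X)
    (s : Retract Y' Y) : HomVanish X' Y' := fun f => by
  rw [← Category.comp_id f, ← Category.id_comp f, ← r.retract, ← s.retract]
  calc ((r.i ≫ r.r) ≫ f) ≫ s.i ≫ s.r = r.i ≫ (r.r ≫ f ≫ s.i) ≫ s.r := by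
        simp only [Category.assoc]
    _ = 0 := by rw [h (r.r ≫ f ≫ s.i), zero_comp, comp_zero]

lemma of_iso [HasZeroMorphisms C] {X X' Y Y' : C} (h : HomVanish X Y) (e : X' ≅ X)
    (e' : Y' ≅ Y) : HomVanish X' Y' :=
  h.of_retract (.ofIso e) (.ofIso e')

end HomVanish

lemma rightOrthogonal_singleton_iff [HasZeroMorphisms C] (X Y : C) :
    (ObjectProperty.singleton X).rightOrthogonal Y ↔ HomVanish X Y :=
  ⟨fun h f => h f (by simp), fun h X' f hX' => by
    obtain rfl : X = X' := by simpa using hX'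
    exact h f⟩

lemma leftOrthogonal_singleton_iff [HasZeroMorphisms C] (X Y : C) :
    (ObjectProperty.singleton Y).leftOrthogonal X ↔ HomVanish X Y :=
  ⟨fun h f => h f (by simp), fun h Y' f hY' => by
    obtain rfl : Y = Y' := by simpa using hY'
    exact h f⟩

lemma homVanish_map_iff {D : Type*} [Category* D] [HasZeroMorphisms C] [HasZeroMorphisms D]
    (F : C ⥤ D) [F.Full] [F.Faithful] [F.PreservesZeroMorphisms] (X Y : C) :
    HomVanish (F.obj X) (F.obj Y) ↔ HomVanish X Y :=
  ⟨fun h f => F.map_injective (by rw [h (F.map f), F.map_zero]), fun h f => by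
    obtain ⟨g, rfl⟩ := F.map_surjective f
    rw [h g, F.map_zero]⟩

lemma forall_homVanish_shift_left_iff_right [Preadditive C] [HasShift C ℤ]
    [∀ n : ℤ, (shiftFunctor C n).Additive] (X Y : C) :
    (∀ n : ℤ, HomVanish (X⟦n⟧) Y) ↔ ∀ n : ℤ, HomVanish X (Y⟦n⟧) :=
  ⟨fun h n => ((homVanish_map_iff (shiftFunctor C n) _ _).2 (h (-n))).of_iso
      ((shiftEquiv C n).counitIso.symm.app X) (Iso.refl _),
    fun h n => ((homVanish_map_iff (shiftFunctor C n) _ _).2 (h (-n))).of_iso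
      (Iso.refl _) ((shiftEquiv C n).counitIso.symm.app Y)⟩

end

section

variable {C : Type*} [Category* C] [Preadditive C] [HasZeroObject C] [HasShift C ℤ]
  [∀ n : ℤ, (shiftFunctor C n).Additive] [Pretriangulated C]

lemma nonempty_retract_of_mor₃_eq_zero {T : Triangle C} (hT : T ∈ distTriang C)
    (h : T.mor₃ = 0) : Nonempty (Retract T.obj₁ T.obj₂) ∧ Nonempty (Retract T.obj₃ T.obj₂) := by
  obtain ⟨e, -, -⟩ := exists_iso_binaryBiproduct_of_distTriang T hT h
  exact ⟨⟨.trans { i := biprod.inl, r := biprod.fst } (.ofIso e.symm)⟩,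
    ⟨.trans { i := biprod.inr, r := biprod.snd } (.ofIso e.symm)⟩⟩

end

/-! ### Homology of truncations -/

section

open DerivedCategory DerivedCategory.TStructure

variable {C : Type*} [Category* C] [Abelian C] [HasDerivedCategory C]

lemma isIso_homologyMap_truncLTι {n i : ℤ} (hi : i < n) (X : DerivedCategory C) :
    IsIso ((homologyFunctor C i).map ((t.truncLTι n).app X)) := by
  have hT := t.triangleLTGE_distinguished n X
  have : Mono ((homologyFunctor C i).map ((t.truncLTι n).app X)) :=
    (HomologySequence.mono_homologyMap_mor₁_iff _ hT (i - 1) i (by lia)).2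
      ((isZero_of_isGE ((t.truncGE n).obj X) n (i - 1) (by lia)).eq_of_src _ _)
  have : Epi ((homologyFunctor C i).map ((t.truncLTι n).app X)) :=
    (HomologySequence.epi_homologyMap_mor₁_iff _ hT i).2
      ((isZero_of_isGE ((t.truncGE n).obj X) n i hi).eq_of_tgt _ _)
  exact isIso_of_mono_of_epi _

lemma isIso_homologyMap_truncGEπ {n i : ℤ} (hi : n ≤ i) (X : DerivedCategory C) :
    IsIso ((homologyFunctor C i).map ((t.truncGEπ n).app X)) := by
  have hT := t.triangleLTGE_distinguished n X
  have : Mono ((homologyFunctor C i).map ((t.truncGEπ n).app X)) :=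
    (HomologySequence.mono_homologyMap_mor₂_iff _ hT i).2
      ((isZero_of_isLE ((t.truncLT n).obj X) (n - 1) i (by lia)).eq_of_src _ _)
  have : Epi ((homologyFunctor C i).map ((t.truncGEπ n).app X)) :=
    (HomologySequence.epi_homologyMap_mor₂_iff _ hT i (i + 1)).2
      ((isZero_of_isLE ((t.truncLT n).obj X) (n - 1) (i + 1) (by lia)).eq_of_tgt _ _)
  exact isIso_of_mono_of_epi _

lemma nonempty_iso_single_homology (X : DerivedCategory C) (n : ℤ) [X.IsGE n] [X.IsLE n] :
    Nonempty (X ≅ (singleFunctor C n).obj ((homologyFunctor C n).obj X)) := by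
  obtain ⟨Y, ⟨e⟩⟩ := exists_iso_singleFunctor_obj_of_isGE_of_isLE X n
  exact ⟨e ≪≫ (singleFunctor C n).mapIso ((singleFunctorCompHomologyFunctorIso C n).symm.app Y ≪≫
    (homologyFunctor C n).mapIso e.symm)⟩

lemma nonempty_iso_single_homology_truncation (X : DerivedCategory C) (n : ℤ) :
    Nonempty ((t.truncGE n).obj ((t.truncLT (n + 1)).obj X) ≅
      (singleFunctor C n).obj ((homologyFunctor C n).obj X)) := by
  obtain ⟨e⟩ := nonempty_iso_single_homology ((t.truncGE n).obj ((t.truncLT (n + 1)).obj X)) n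
  have := isIso_homologyMap_truncLTι (lt_add_one n) X
  have := isIso_homologyMap_truncGEπ le_rfl ((t.truncLT (n + 1)).obj X) (n := n)
  exact ⟨e ≪≫ (singleFunctor C n).mapIso
    ((asIso ((homologyFunctor C n).map ((t.truncGEπ n).app _))).symm ≪≫
      asIso ((homologyFunctor C n).map ((t.truncLTι (n + 1)).app X)))⟩

lemma bounded_truncLT {X : DerivedCategory C} (hX : t.bounded X) (n : ℤ) :
    t.bounded ((t.truncLT n).obj X) := by
  obtain ⟨⟨a, _⟩, ⟨b, _⟩⟩ := hX
  exact ⟨⟨a, inferInstance⟩, ⟨b, inferInstance⟩⟩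

lemma bounded_truncGE {X : DerivedCategory C} (hX : t.bounded X) (n : ℤ) :
    t.bounded ((t.truncGE n).obj X) := by
  obtain ⟨⟨a, _⟩, ⟨b, _⟩⟩ := hX
  exact ⟨⟨a, inferInstance⟩, ⟨b, inferInstance⟩⟩

lemma prop_of_prop_single_homology (P : ObjectProperty (DerivedCategory C)) [P.ContainsZero]
    [P.IsClosedUnderIsomorphisms] [P.IsTriangulatedClosed₂] {X : DerivedCategory C}
    (hX : t.bounded X) (h : ∀ i, P ((singleFunctor C i).obj ((homologyFunctor C i).obj X))) :
    P X := by
  obtain ⟨⟨a, _⟩, ⟨b, _⟩⟩ := hX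
  suffices hP : ∀ n, a ≤ n → P ((t.truncLT n).obj X) by
    have : X.IsLE (max a b) := t.isLE_of_le X b (max a b)
    have := (t.isLE_iff_isIso_truncLTι_app (max a b) _ rfl X).1 inferInstance
    exact P.prop_of_iso (asIso ((t.truncLTι (max a b + 1)).app X)) (hP _ (by lia))
  intro n hn
  induction n, hn using Int.leInduction with
  | base => exact P.prop_of_isZero (t.isZero_truncLT_obj_of_isGE a X)
  | succ n _ ih =>
    have := t.isIso_truncLT_map_truncLTι_app n (n + 1) (by lia) X
    refine P.ext_of_isTriangulatedClosed₂ _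
      (t.triangleLTGE_distinguished n ((t.truncLT (n + 1)).obj X)) ?_ ?_
    · exact P.prop_of_iso (asIso ((t.truncLT n).map ((t.truncLTι (n + 1)).app X))).symm ih
    · exact P.prop_of_iso (nonempty_iso_single_homology_truncation X n).some.symm (h n)

lemma homVanish_of_single_homology_left {X Y : DerivedCategory C} (hX : t.bounded X)
    (h : ∀ i, HomVanish ((singleFunctor C i).obj ((homologyFunctor C i).obj X)) Y) :
    HomVanish X Y := by
  simp only [← leftOrthogonal_singleton_iff] at h ⊢
  exact prop_of_prop_single_homology _ hX h

lemma homVanish_of_single_homology_right {X Y : DerivedCategory C} (hY : t.bounded Y)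
    (h : ∀ i, HomVanish X ((singleFunctor C i).obj ((homologyFunctor C i).obj Y))) :
    HomVanish X Y := by
  simp only [← rightOrthogonal_singleton_iff] at h ⊢
  exact prop_of_prop_single_homology _ hY h

lemma homVanish_single_of_lt (A B : C) {a b : ℤ} (hab : a < b) :
    HomVanish ((singleFunctor C a).obj A) ((singleFunctor C b).obj B) :=
  fun f => t.zero f a b hab

lemma homVanish_single_iff_of_sub_eq (A B : C) {a b a' b' : ℤ} (h : a - b = a' - b') :
    HomVanish ((singleFunctor C a).obj A) ((singleFunctor C b).obj B) ↔
      HomVanish ((singleFunctor C a').obj A) ((singleFunctor C b').obj B) := by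
  rw [← homVanish_map_iff (shiftFunctor (DerivedCategory C) (a - a'))]
  let e := ((singleFunctors C).shiftIso (a - a') a' a (by lia)).app A
  let e' := ((singleFunctors C).shiftIso (a - a') b' b (by lia)).app B
  exact ⟨fun h => h.of_iso e.symm e'.symm, fun h => h.of_iso e e'⟩

end

/-! ### Effaceability and vanishing of Ext -/

section

variable {C : Type*} [Category* C] [Abelian C]

open HomologicalComplex in
lemma epi_homologyMap_mkHomFromSingle {ι : Type*} [DecidableEq ι] {c : ComplexShape ι}
    {K : HomologicalComplex C c} {j : ι} {A : C} (φ : A ⟶ K.X j) [Epi φ]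
    (hφ : ∀ k, c.Rel j k → φ ≫ K.d j k = 0) :
    Epi (homologyMap (mkHomFromSingle φ hφ) j) := by
  refine (epi_homologyMap_iff_up_to_refinements _ _ j _ rfl rfl).2 fun A' y _ => ?_
  obtain ⟨A'', π, hπ, x, hx⟩ := surjective_up_to_refinements_of_epi φ y
  refine ⟨A'', π, hπ, x ≫ (singleObjXSelf c j A).inv, by simp, 0, ?_⟩
  rw [mkHomFromSingle_f, Category.assoc, Iso.inv_hom_id_assoc, zero_comp, add_zero, hx]

end

section

open DerivedCategory DerivedCategory.TStructure

variable {C : Type*} [Category* C] [Abelian C] [HasDerivedCategory C]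

lemma exists_single_hom_epi_homologyMap (X : DerivedCategory C) (a : ℤ) [X.IsLE a] :
    ∃ (P : C) (g : (singleFunctor C a).obj P ⟶ X), Epi ((homologyFunctor C a).map g) := by
  obtain ⟨K, _, ⟨e⟩⟩ := exists_iso_Q_obj_of_isLE X a
  let φ : (CochainComplex.singleFunctor C a).obj (K.X a) ⟶ K :=
    HomologicalComplex.mkHomFromSingle (𝟙 (K.X a)) fun k hk =>
      (K.isZero_of_isStrictlyLE a k
        (by rw [← show a + 1 = k from hk]; exact lt_add_one a)).eq_of_tgt _ _
  have : Epi (HomologicalComplex.homologyMap φ a) := epi_homologyMap_mkHomFromSingle _ _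
  have : Epi ((homologyFunctor C a).map (Q.map φ)) :=
    ((MorphismProperty.epimorphisms C).arrow_mk_iso_iff
      (((Functor.mapArrowFunctor _ _).mapIso (homologyFunctorFactors C a)).app (Arrow.mk φ))).2 this
  refine ⟨K.X a, (singleFunctorIsoCompQ C a).hom.app _ ≫ Q.map φ ≫ e.inv, ?_⟩
  rw [Functor.map_comp, Functor.map_comp]
  infer_instance

lemma exists_epi_singleFunctor_map_comp_eq_zero {A : C} {Y : DerivedCategory C} {a b : ℤ}
    (hab : b < a) [Y.IsLE b] (f : (singleFunctor C a).obj A ⟶ Y) :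
    ∃ (P : C) (p : P ⟶ A), Epi p ∧ (singleFunctor C a).map p ≫ f = 0 := by
  obtain ⟨F, i, δ, hT⟩ := distinguished_cocone_triangle₁ f
  have hif : i ≫ f = 0 := comp_distTriang_mor_zero₁₂ _ hT
  have : F.IsLE a := by
    have : (Y⟦(-1 : ℤ)⟧).IsLE (b + 1) := t.isLE_shift Y b (-1) (b + 1)
    exact t.isLE₂ _ (inv_rot_of_distTriang _ hT) a (t.isLE_of_le (Y⟦(-1 : ℤ)⟧) (b + 1) a)
      (inferInstanceAs (((singleFunctor C a).obj A).IsLE a))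
  obtain ⟨P, g, hg⟩ := exists_single_hom_epi_homologyMap F a
  obtain ⟨p, hp⟩ := (singleFunctor C a).map_surjective (g ≫ i)
  have : Epi ((homologyFunctor C a).map i) :=
    (HomologySequence.epi_homologyMap_mor₁_iff _ hT a).2
      ((isZero_of_isLE Y b a hab).eq_of_tgt _ _)
  have : Epi ((homologyFunctor C a).map ((singleFunctor C a).map p)) := by
    rw [hp, Functor.map_comp]
    exact epi_comp _ _
  refine ⟨P, p, ?_, by rw [hp, Category.assoc, hif, comp_zero]⟩
  exact ((MorphismProperty.epimorphisms C).arrow_mk_iso_iff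
    (((Functor.mapArrowFunctor _ _).mapIso
      (singleFunctorCompHomologyFunctorIso C a)).app (Arrow.mk p))).1 this

open Abelian in
lemma exists_epi_mk₀_comp_eq_zero [HasExt C] {A B : C} {n : ℕ} (e : Ext A B (n + 1)) :
    ∃ (P : C) (p : P ⟶ A), Epi p ∧ (Ext.mk₀ p).comp e (zero_add _) = 0 := by
  have : (((singleFunctor C 0).obj B)⟦((n + 1 : ℕ) : ℤ)⟧).IsLE (-(n + 1 : ℕ)) :=
    t.isLE_shift _ 0 _ _
  obtain ⟨P, p, hp, h⟩ :=
    exists_epi_singleFunctor_map_comp_eq_zero (a := 0) (b := -(n + 1 : ℕ)) (by lia) e.hom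
  refine ⟨P, p, hp, Ext.ext ?_⟩
  rw [Ext.comp_hom, Ext.mk₀_hom, ShiftedHom.mk₀_comp, h, Ext.zero_hom]

end

section

open Abelian

variable {C : Type*} [Category* C] [Abelian C] [HasExt C]

lemma hasProjectiveDimensionLT_of_forall_ext_eq_zero {n : ℕ}
    (h : ∀ ⦃A B : C⦄ (e : Ext A B n), e = 0) (A : C) : HasProjectiveDimensionLT A n := by
  let := HasDerivedCategory.standard C
  rw [hasProjectiveDimensionLT_iff]
  intro i hi B
  induction i, hi using Nat.le_induction generalizing A with
  | base => exact @h A B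
  | succ i _ ih =>
    intro e
    obtain ⟨P, p, _, hp⟩ := exists_epi_mk₀_comp_eq_zero e
    have hS : (ShortComplex.mk (kernel.ι p) p (kernel.condition p)).ShortExact :=
      { exact := ShortComplex.exact_kernel p }
    obtain ⟨e', rfl⟩ := Ext.contravariant_sequence_exact₃ hS B e hp (add_comm 1 i)
    rw [ih _ e', Ext.comp_zero]

end

/-! ### Hereditary categories -/

section

open DerivedCategory DerivedCategory.TStructure Abelian

lemma homVanish_single_iff_ext (A B : 𝒜) (n : ℕ) {a b : ℤ} (h : a = b + n) :
    HomVanish ((singleFunctor 𝒜 a).obj A) ((singleFunctor 𝒜 b).obj B) ↔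
      ∀ e : Ext A B n, e = 0 := by
  let i : ((singleFunctor 𝒜 0).obj B)⟦(n : ℤ)⟧ ≅ (singleFunctor 𝒜 (-n)).obj B :=
    ((singleFunctors 𝒜).shiftIso (n : ℤ) (-n) 0 (by lia)).app B
  rw [homVanish_single_iff_of_sub_eq A B (show a - b = 0 - -(n : ℤ) by lia)]
  refine ⟨fun h e => Ext.ext ?_, fun h f => ?_⟩
  · rw [Ext.zero_hom]
    exact h.of_iso (Iso.refl _) i e.hom
  · obtain ⟨e, he⟩ := Ext.homEquiv.surjective (f ≫ i.inv)
    rw [← cancel_mono i.inv, ← he, h e, zero_comp]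
    exact Ext.zero_hom ..

/-- Orthogonality of two objects of an abelian category in degrees `0` and `1`: this is the
relation underlying the perpendicular categories `ℬ^⊥` and `⊥ℬ`. -/
def ExtOrthogonal (A B : 𝒜) : Prop :=
  (∀ f : A ⟶ B, f = 0) ∧ ∀ e : Ext A B 1, e = 0

lemma extOrthogonal_iff_homVanish_single (A B : 𝒜) :
    ExtOrthogonal A B ↔
      HomVanish ((singleFunctor 𝒜 0).obj A) ((singleFunctor 𝒜 0).obj B) ∧
        HomVanish ((singleFunctor 𝒜 1).obj A) ((singleFunctor 𝒜 0).obj B) :=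
  and_congr (homVanish_map_iff (singleFunctor 𝒜 0) A B).symm
    (homVanish_single_iff_ext A B 1 (by simp)).symm

lemma ExtOrthogonal.of_iso {A A' B B' : 𝒜} (h : ExtOrthogonal A B) (e : A' ≅ A) (e' : B' ≅ B) :
    ExtOrthogonal A' B' := by
  rw [extOrthogonal_iff_homVanish_single] at h ⊢
  exact ⟨h.1.of_iso (Functor.mapIso _ e) (Functor.mapIso _ e'),
    h.2.of_iso (Functor.mapIso _ e) (Functor.mapIso _ e')⟩

namespace Hereditary

lemma homVanish_single (hher : Hereditary (𝒜 := 𝒜)) (A B : 𝒜) {a b : ℤ} (hab : b + 2 ≤ a) :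
    HomVanish ((singleFunctor 𝒜 a).obj A) ((singleFunctor 𝒜 b).obj B) := by
  obtain ⟨n, rfl⟩ := Int.le.dest hab
  have := hasProjectiveDimensionLT_of_forall_ext_eq_zero hher A
  exact (homVanish_single_iff_ext A B (2 + n) (by push_cast; ring)).2
    fun e => e.eq_zero_of_hasProjectiveDimensionLT 2 (by lia)

lemma forall_homVanish_single_iff_extOrthogonal (hher : Hereditary (𝒜 := 𝒜)) (A B : 𝒜) :
    (∀ a b : ℤ, HomVanish ((singleFunctor 𝒜 a).obj A) ((singleFunctor 𝒜 b).obj B)) ↔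
      ExtOrthogonal A B := by
  rw [extOrthogonal_iff_homVanish_single]
  refine ⟨fun h => ⟨h 0 0, h 1 0⟩, fun ⟨h₀, h₁⟩ a b => ?_⟩
  obtain hab | hab | hab | hab : a < b ∨ a - b = 0 - 0 ∨ a - b = 1 - 0 ∨ b + 2 ≤ a := by lia
  · exact homVanish_single_of_lt A B hab
  · exact (homVanish_single_iff_of_sub_eq A B hab).2 h₀
  · exact (homVanish_single_iff_of_sub_eq A B hab).2 h₁
  · exact hher.homVanish_single A B hab

lemma homVanish_of_isGE_of_isLE (hher : Hereditary (𝒜 := 𝒜)) {X Y : DerivedCategory 𝒜}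
    (hX : t.bounded X) (hY : t.bounded Y) (a b : ℤ) [X.IsGE a] [Y.IsLE b] (hab : b + 2 ≤ a) :
    HomVanish X Y := by
  refine homVanish_of_single_homology_left hX fun i =>
    homVanish_of_single_homology_right hY fun j => ?_
  rcases lt_or_ge i a with hi | hi
  · exact fun f => (Functor.map_isZero _ (isZero_of_isGE X a i hi)).eq_of_src f 0
  rcases lt_or_ge b j with hj | hj
  · exact fun f => (Functor.map_isZero _ (isZero_of_isLE Y b j hj)).eq_of_tgt f 0
  exact hher.homVanish_single _ _ (by lia)

lemma nonempty_retract_truncation (hher : Hereditary (𝒜 := 𝒜)) {X : DerivedCategory 𝒜}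
    (hX : t.bounded X) (n : ℤ) :
    Nonempty (Retract ((t.truncLT n).obj X) X) ∧ Nonempty (Retract ((t.truncGE n).obj X) X) := by
  have hLT := t.bounded.le_shift (1 : ℤ) _ (bounded_truncLT hX n)
  have : (((t.truncLT n).obj X)⟦(1 : ℤ)⟧).IsLE (n - 2) := t.isLE_shift _ (n - 1) 1 (n - 2)
  exact nonempty_retract_of_mor₃_eq_zero (t.triangleLTGE_distinguished n X)
    (hher.homVanish_of_isGE_of_isLE (bounded_truncGE hX n) hLT n (n - 2) (by lia) _)

lemma nonempty_retract_single_homology (hher : Hereditary (𝒜 := 𝒜)) {X : DerivedCategory 𝒜}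
    (hX : t.bounded X) (n : ℤ) :
    Nonempty (Retract ((singleFunctor 𝒜 n).obj ((homologyFunctor 𝒜 n).obj X)) X) := by
  obtain ⟨e⟩ := nonempty_iso_single_homology_truncation X n
  obtain ⟨r⟩ := (hher.nonempty_retract_truncation hX (n + 1)).1
  obtain ⟨s⟩ := (hher.nonempty_retract_truncation (bounded_truncLT hX (n + 1)) n).2
  exact ⟨(Retract.ofIso e.symm).trans (s.trans r)⟩

lemma homVanish_iff_single_homology (hher : Hereditary (𝒜 := 𝒜)) {X Y : DerivedCategory 𝒜}
    (hX : t.bounded X) (hY : t.bounded Y) :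
    HomVanish X Y ↔ ∀ i j, HomVanish ((singleFunctor 𝒜 i).obj ((homologyFunctor 𝒜 i).obj X))
      ((singleFunctor 𝒜 j).obj ((homologyFunctor 𝒜 j).obj Y)) :=
  ⟨fun h i j => h.of_retract (hher.nonempty_retract_single_homology hX i).some
      (hher.nonempty_retract_single_homology hY j).some,
    fun h => homVanish_of_single_homology_left hX fun i =>
      homVanish_of_single_homology_right hY fun j => h i j⟩

lemma forall_homVanish_shift_iff_extOrthogonal (hher : Hereditary (𝒜 := 𝒜))
    {X Y : DerivedCategory 𝒜} (hX : t.bounded X) (hY : t.bounded Y) :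
    (∀ n : ℤ, HomVanish X (Y⟦n⟧)) ↔
      ∀ i j, ExtOrthogonal ((homologyFunctor 𝒜 i).obj X) ((homologyFunctor 𝒜 j).obj Y) := by
  let e (n j k : ℤ) (h : n + j = k) :=
    (singleFunctor 𝒜 j).mapIso (((homologyFunctor 𝒜 0).shiftIso n j k h).app Y)
  simp only [← hher.forall_homVanish_single_iff_extOrthogonal,
    hher.homVanish_iff_single_homology hX (t.bounded.le_shift _ _ hY)]
  refine ⟨fun h i j a b => ?_, fun h n i j => ?_⟩
  · have := h (j - i + a - b) i (i - a + b)
    exact (homVanish_single_iff_of_sub_eq _ _ (by lia)).1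
      (this.of_iso (Iso.refl _) (e _ _ j (by lia)).symm)
  · exact (h i (n + j) i j).of_iso (Iso.refl _) (e n j _ rfl)

end Hereditary

end

/-! ### Perpendicular categories -/

section

open DerivedCategory DerivedCategory.TStructure

variable {C : Type*} [Category* C] [Abelian C]

lemma IsWide.mem_of_isZero {ℬ : Set C} (hℬ : IsWide ℬ) {B Z : C} (hB : B ∈ ℬ)
    (hZ : IsZero Z) : Z ∈ ℬ :=
  hℬ.1 (hℬ.2.1 (𝟙 B) hB hB) ((isZero_kernel_of_mono (𝟙 B)).iso hZ)

variable [HasDerivedCategory C]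

lemma bounded_of_mem_Db {X : DerivedCategory C} (hX : X ∈ Db (𝒜 := C)) : t.bounded X := by
  obtain ⟨a, b, h⟩ := hX
  refine ⟨⟨-b, (isGE_iff X _).2 fun i hi => ?_⟩, ⟨-a, (isLE_iff X _).2 fun i hi => ?_⟩⟩ <;>
    simpa only [Hgy, neg_neg] using h (-i) (by lia)

lemma forall_homology_mem_iff {ℬ : Set C} {X : DerivedCategory C} :
    (∀ k : ℤ, (Hgy k).obj X ∈ ℬ) ↔ ∀ i : ℤ, (homologyFunctor C i).obj X ∈ ℬ :=
  (Equiv.neg ℤ).forall_congr fun _ => Iff.rfl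

lemma singleFunctor_obj_mem_DbOf {ℬ : Set C} (hℬ : Replete ℬ)
    (hℬ₀ : ∀ ⦃B Z : C⦄, B ∈ ℬ → IsZero Z → Z ∈ ℬ) {B : C} (hB : B ∈ ℬ) (i : ℤ) :
    (singleFunctor C i).obj B ∈ DbOf ℬ := by
  obtain ⟨k, rfl⟩ := neg_surjective i
  refine ⟨single_mem_Db B k, fun n => ?_⟩
  obtain rfl | hn := eq_or_ne n k
  · exact hℬ hB ((singleFunctorCompHomologyFunctorIso C (-n)).symm.app B)
  · exact hℬ₀ hB (isZero_homology_single B k n hn)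

lemma rightPerpDb_DbOf (hher : Hereditary (𝒜 := 𝒜)) {ℬ : Set 𝒜} (hℬ : Replete ℬ)
    (hℬ₀ : ∀ ⦃B Z : 𝒜⦄, B ∈ ℬ → IsZero Z → Z ∈ ℬ) :
    rightPerpDb (DbOf ℬ) = DbOf (rightPerpAb ℬ) := by
  ext X
  refine and_congr_right fun hX => ?_
  have key {S : DerivedCategory 𝒜} (hS : S ∈ DbOf ℬ) :=
    hher.forall_homVanish_shift_iff_extOrthogonal (bounded_of_mem_Db hS.1) (bounded_of_mem_Db hX)
  rw [forall_homology_mem_iff]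
  refine ⟨fun h j B hB => ?_, fun h S hS => ?_⟩
  · have hS := singleFunctor_obj_mem_DbOf hℬ hℬ₀ hB 0
    exact ((key hS).1 (h _ hS) 0 j).of_iso
      ((singleFunctorCompHomologyFunctorIso 𝒜 0).symm.app B) (Iso.refl _)
  · exact (key hS).2 fun i j => h j _ (forall_homology_mem_iff.1 hS.2 i)

lemma leftPerpDb_DbOf (hher : Hereditary (𝒜 := 𝒜)) {ℬ : Set 𝒜} (hℬ : Replete ℬ)
    (hℬ₀ : ∀ ⦃B Z : 𝒜⦄, B ∈ ℬ → IsZero Z → Z ∈ ℬ) :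
    leftPerpDb (DbOf ℬ) = DbOf (leftPerpAb ℬ) := by
  ext X
  refine and_congr_right fun hX => ?_
  have key {S : DerivedCategory 𝒜} (hS : S ∈ DbOf ℬ) :=
    (forall_homVanish_shift_left_iff_right X S).trans
      (hher.forall_homVanish_shift_iff_extOrthogonal
        (bounded_of_mem_Db hX) (bounded_of_mem_Db hS.1))
  rw [forall_homology_mem_iff]
  refine ⟨fun h i B hB => ?_, fun h S hS => ?_⟩
  · have hS := singleFunctor_obj_mem_DbOf hℬ hℬ₀ hB 0
    exact ((key hS).1 (h _ hS) i 0).of_iso (Iso.refl _)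
      ((singleFunctorCompHomologyFunctorIso 𝒜 0).symm.app B)
  · exact (key hS).2 fun i j => h i _ (forall_homology_mem_iff.1 hS.2 j)

end

theorem derived_perpendicular_of_wide_general
    (hher : Hereditary (𝒜 := 𝒜)) (ℬ : Set 𝒜) (hℬ : Replete ℬ)
    (hℬ₀ : ∀ ⦃B Z : 𝒜⦄, B ∈ ℬ → IsZero Z → Z ∈ ℬ) :
    DbOf (rightPerpAb ℬ) = rightPerpDb (DbOf ℬ) ∧
    DbOf (leftPerpAb ℬ) = leftPerpDb (DbOf ℬ) :=
  ⟨(rightPerpDb_DbOf hher hℬ hℬ₀).symm, (leftPerpDb_DbOf hher hℬ hℬ₀).symm⟩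

theorem derived_perpendicular_of_wide
    (hher : Hereditary (𝒜 := 𝒜)) (ℬ : Set 𝒜) (hℬ : IsWide ℬ) :
    DbOf (rightPerpAb ℬ) = rightPerpDb (DbOf ℬ) ∧
    DbOf (leftPerpAb ℬ) = leftPerpDb (DbOf ℬ) :=
  derived_perpendicular_of_wide_general hher ℬ hℬ.1 fun _ _ => IsWide.mem_of_isZero hℬ
end
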